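/- arXiv:2004.10521 — 3 statements merged into one kernel-verified Lean document; each statement's English description precedes it below -/
import Mathlib

section
/- If Z satisfies the graphical adjustment criterion for A,Y,L,N in G, then Z ∩ an_G({A,Y}∪L) also satisfies the graphical adjustment criterion for A,Y,L,N in G. In particular, every minimal set satisfying the criterion is a subset of an_G({A,Y}∪L). -/
open Relation Set

namespace CausalGraph

variable {V : Type*} [Fintype V] [DecidableEq V]

/-- `p` is a path in the undirected sense from `u` to `v` along adjacency `Adj`:
a nonempty list of pairwise distinct vertices, consecutive ones adjacent,
starting at `u` and ending at `v`. -/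
def IsPath (Adj : V → V → Prop) (u v : V) (p : List V) : Prop :=
  List.Chain' Adj p ∧ p.head? = some u ∧ p.getLast? = some v ∧ p.Nodup

/-- Ancestors of `S` in the digraph `D` (every vertex is an ancestor of itself). -/
def anc (D : V → V → Prop) (S : Set V) : Set V :=
  {u | ∃ v ∈ S, Relation.ReflTransGen D u v}

/-- Descendants of `S` in the digraph `D` (every vertex is a descendant of itself). -/
def desc (D : V → V → Prop) (S : Set V) : Set V :=
  {u | ∃ v ∈ S, Relation.ReflTransGen D v u}

/-- Parents of vertices of `S` in the digraph `D`. -/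
def parents (D : V → V → Prop) (S : Set V) : Set V :=
  {u | ∃ v ∈ S, D u v}

/-- The digraph `D` is acyclic. -/
def Acyclic (D : V → V → Prop) : Prop :=
  ∀ u v, D u v → ¬ Relation.ReflTransGen D v u

/-- Vertices other than `A` lying on a directed path from `A` to `Y`. -/
def cn (D : V → V → Prop) (A Y : V) : Set V :=
  {v | v ≠ A ∧ Relation.ReflTransGen D A v ∧ Relation.ReflTransGen D v Y}

/-- The forbidden set. -/
def forb (D : V → V → Prop) (A Y : V) : Set V :=
  desc D (cn D A Y) ∪ {A}

/-- Proper back-door graph: delete every edge from `A` into `cn D A Y`. -/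
def pbd (D : V → V → Prop) (A Y : V) : V → V → Prop :=
  fun u v => D u v ∧ ¬(u = A ∧ v ∈ cn D A Y)

/-- `y` is an interior vertex of the list `p` with neighbours `x` and `z` on the path. -/
def InteriorAt (p : List V) (x y z : V) : Prop :=
  ∃ s t : List V, p = s ++ x :: y :: z :: t

/-- The path `p` is blocked by `Z` in the digraph `D`: some interior non-collider
lies in `Z`, or some interior collider has no descendant in `Z`. -/
def Blocked (D : V → V → Prop) (Z : Set V) (p : List V) : Prop :=
  (∃ x y z, InteriorAt p x y z ∧ ¬(D x y ∧ D z y) ∧ y ∈ Z) ∨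
  (∃ x y z, InteriorAt p x y z ∧ (D x y ∧ D z y) ∧ ∀ d ∈ desc D {y}, d ∉ Z)

/-- d-separation of `S` and `T` given `Z` in the digraph `D`. -/
def DSep (D : V → V → Prop) (S T Z : Set V) : Prop :=
  ∀ s ∈ S, ∀ t ∈ T, ∀ p : List V,
    IsPath (fun a b => D a b ∨ D b a) s t p → Blocked D Z p

/-- Moral graph of the subgraph of the digraph `D` induced on `Vs`. -/
def moral (D : V → V → Prop) (Vs : Set V) : SimpleGraph V :=
  SimpleGraph.fromRel (fun u v =>
    u ∈ Vs ∧ v ∈ Vs ∧ (D u v ∨ D v u ∨ ∃ w ∈ Vs, D u w ∧ D v w))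

/-- Separation in an undirected graph: every path from `S` to `T` meets `W`. -/
def USep (H : SimpleGraph V) (S T W : Set V) : Prop :=
  ∀ s ∈ S, ∀ t ∈ T, ∀ p : List V, IsPath H.Adj s t p → ∃ z ∈ W, z ∈ p

/-- `Z` is an `A`–`Y` cut in an undirected graph `H` with vertex set `Vs`. -/
def IsCut (Vs : Set V) (H : SimpleGraph V) (A Y : V) (Z : Set V) : Prop :=
  Z ⊆ Vs ∧ Z ∩ {A, Y} = ∅ ∧ ∀ p : List V, IsPath H.Adj A Y p → ∃ z ∈ Z, z ∈ p

def MinimalCut (Vs : Set V) (H : SimpleGraph V) (A Y : V) (Z : Set V) : Prop :=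
  IsCut Vs H A Y Z ∧ ∀ Z' ⊂ Z, ¬ IsCut Vs H A Y Z'

def MinimumCut (Vs : Set V) (H : SimpleGraph V) (A Y : V) (Z : Set V) : Prop :=
  IsCut Vs H A Y Z ∧ ∀ Z', IsCut Vs H A Y Z' → Z.ncard ≤ Z'.ncard

/-- Connected component of `y` in `H` restricted to the complement of `U`:
vertices reachable from `y` by paths avoiding `U`. -/
def cc (H : SimpleGraph V) (U : Set V) (y : V) : Set V :=
  {w | ∃ p : List V, IsPath H.Adj y w p ∧ ∀ x ∈ p, x ∉ U}

/-- Boundary of `S` in `H`: vertices outside `S` adjacent to some vertex of `S`. -/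
def bdry (H : SimpleGraph V) (S : Set V) : Set V :=
  {v | v ∉ S ∧ ∃ u ∈ S, H.Adj v u}

/-- The partial order `Z₁ ⊴_H Z₂` between `A`–`Y` cuts. -/
def TLE (H : SimpleGraph V) (A Y : V) (Z₁ Z₂ : Set V) : Prop :=
  USep H {Y} (Z₂ \ Z₁) Z₁ ∧ USep H {A} (Z₁ \ Z₂) Z₂

/-- Ancestors of `{A, Y} ∪ L`. -/
def ancAYL (D : V → V → Prop) (A Y : V) (L : Set V) : Set V :=
  anc D ({A, Y} ∪ L)

/-- The moral graph `H⁰` of the proper back-door graph induced on `an_G({A,Y} ∪ L)`. -/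
def H0 (D : V → V → Prop) (A Y : V) (L : Set V) : SimpleGraph V :=
  moral (pbd D A Y) (ancAYL D A Y L)

/-- The set of vertices removed from `H⁰` when constructing `H¹`. -/
def Ignore (D : V → V → Prop) (A Y : V) (L N : Set V) : Set V :=
  (ancAYL D A Y L \ {A, Y}) ∩ ((Set.univ \ N) ∪ forb D A Y)

/-- Vertex set of `H¹`. -/
def H1verts (D : V → V → Prop) (A Y : V) (L N : Set V) : Set V :=
  ancAYL D A Y L \ Ignore D A Y L N

/-- The non-parametric adjustment efficiency graph `H¹`: delete the vertices of
`Ignore`, join two remaining vertices if they are joined in `H⁰` by a path all of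
whose intermediate vertices are in `Ignore`, and join `A` and `Y` to every vertex
of `L`. -/
def H1 (D : V → V → Prop) (A Y : V) (L N : Set V) : SimpleGraph V :=
  SimpleGraph.fromRel (fun u v =>
    u ∈ H1verts D A Y L N ∧ v ∈ H1verts D A Y L N ∧
      ((∃ p : List V, IsPath (H0 D A Y L).Adj u v p ∧
          ∀ x ∈ p, x ≠ u → x ≠ v → x ∈ Ignore D A Y L N) ∨
        (u = A ∧ v ∈ L) ∨ (u = Y ∧ v ∈ L)))

/-- The graphical adjustment criterion for `A, Y, L, N` in the DAG `D`. -/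
def GAC (D : V → V → Prop) (A Y : V) (L N Z : Set V) : Prop :=
  DSep (pbd D A Y) {A} {Y} Z ∧ Z ∩ forb D A Y = ∅ ∧ L ⊆ Z ∧ Z ⊆ N

def MinimalGAC (D : V → V → Prop) (A Y : V) (L N Z : Set V) : Prop :=
  GAC D A Y L N Z ∧ ∀ Z' ⊂ Z, ¬ GAC D A Y L N Z'

def MinimumGAC (D : V → V → Prop) (A Y : V) (L N Z : Set V) : Prop :=
  GAC D A Y L N Z ∧ ∀ Z', GAC D A Y L N Z' → Z.ncard ≤ Z'.ncard

/-- Graphical admissibility of the pair `(L, N)`. -/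
def Admissible (D : V → V → Prop) (A Y : V) (L N : Set V) : Prop :=
  ∃ Z, GAC D A Y L N Z

end CausalGraph

namespace CausalGraph

theorem aux_fwd {V : Type*} (E : V → V → Prop) (W : Set V)
    (hW : ∀ u v, E u v → v ∈ W → u ∈ W) (l : List V) :
    ∀ x y, List.IsChain (fun a b => E a b ∨ E b a) (x :: y :: l) →
      (∀ w, (x :: y :: l).getLast? = some w → w ∈ W) →
      (∀ a b c, (∃ s t : List V, x :: y :: l = s ++ a :: b :: c :: t) →
        E a b → E c b → b ∈ W) →
      E x y → y ∈ W := by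
  induction l with
  | nil =>
    intro x y _ hl _ _
    exact hl y (by simp)
  | cons z l ih =>
    intro x y hc hl hcol hxy
    have hc2 := (List.isChain_cons_cons.1 hc).2
    rcases (List.isChain_cons_cons.1 hc2).1 with h | h
    · refine hW y z h (ih y z hc2 ?_ ?_ h)
      · intro w hw
        exact hl w (by simpa using hw)
      · rintro a b c ⟨s, t, hst⟩
        exact hcol a b c ⟨x :: s, t, by rw [hst]; rfl⟩
    · exact hcol x y z ⟨[], l, rfl⟩ hxy h

theorem aux_int {V : Type*} (E : V → V → Prop) (W : Set V)
    (hW : ∀ u v, E u v → v ∈ W → u ∈ W) (p : List V)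
    (hc : List.IsChain (fun a b => E a b ∨ E b a) p)
    (hl : ∀ w, p.getLast? = some w → w ∈ W)
    (hcol : ∀ a b c, (∃ s t : List V, p = s ++ a :: b :: c :: t) →
        E a b → E c b → b ∈ W)
    (y z : V) (s t : List V) (hp : p = s ++ y :: z :: t) (h : E y z) : y ∈ W := by
  subst hp
  refine hW y z h (aux_fwd E W hW t y z ?_ ?_ ?_ h)
  · exact (List.isChain_append.1 hc).2.1
  · intro w hw
    refine hl w ?_
    rw [List.getLast?_append, hw]; rfl
  · rintro a b c ⟨s', t', hst⟩
    exact hcol a b c ⟨s ++ s', t', by rw [hst, List.append_assoc]⟩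

theorem aux_gac {V : Type*} [Fintype V] [DecidableEq V]
    (D : V → V → Prop) (A Y : V) (L N Z : Set V) (h : GAC D A Y L N Z) :
    GAC D A Y L N (Z ∩ ancAYL D A Y L) := by
  obtain ⟨hsep, hforb, hL, hN⟩ := h
  have hW : ∀ u v, pbd D A Y u v → v ∈ ancAYL D A Y L → u ∈ ancAYL D A Y L := by
    rintro u v huv ⟨w, hw, hvw⟩
    exact ⟨w, hw, Relation.ReflTransGen.head huv.1 hvw⟩
  have hWs : ∀ u v, Relation.ReflTransGen (pbd D A Y) u v →
      v ∈ ancAYL D A Y L → u ∈ ancAYL D A Y L := by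
    intro u v huv hv
    induction huv using Relation.ReflTransGen.head_induction_on with
    | refl => exact hv
    | head h1 _ ih => exact hW _ _ h1 ih
  refine ⟨?_, ?_, ?_, fun x hx => hN hx.1⟩
  · rintro a ha y hy p hp
    obtain rfl : a = A := ha
    obtain rfl : y = Y := hy
    by_contra hnb
    have hcol : ∀ u b c, (∃ s t : List V, p = s ++ u :: b :: c :: t) →
        pbd D a y u b → pbd D a y c b → b ∈ ancAYL D a y L := by
      intro u b c hi h1 h2
      by_contra hb
      apply hnb
      refine Or.inr ⟨u, b, c, hi, ⟨h1, h2⟩, ?_⟩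
      rintro d ⟨b', hb', hd⟩ hdZ
      obtain rfl : b' = b := hb'
      exact hb (hWs _ _ hd hdZ.2)
    obtain ⟨hc, hh, hl, hnd⟩ := hp
    have hlW : ∀ w, p.getLast? = some w → w ∈ ancAYL D a y L := by
      intro w hw
      rw [hl] at hw
      obtain rfl := Option.some.inj hw
      exact ⟨_, by simp, Relation.ReflTransGen.refl⟩
    have hhW : ∀ w, p.reverse.getLast? = some w → w ∈ ancAYL D a y L := by
      intro w hw
      rw [List.getLast?_reverse, hh] at hw
      obtain rfl := Option.some.inj hw
      exact ⟨_, by simp, Relation.ReflTransGen.refl⟩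
    have hcr : List.IsChain (fun a' b => pbd D a y a' b ∨ pbd D a y b a') p.reverse := by
      rw [List.isChain_reverse]
      exact hc.imp (fun _ _ h => h.symm)
    have hcolr : ∀ u b c, (∃ s t : List V, p.reverse = s ++ u :: b :: c :: t) →
        pbd D a y u b → pbd D a y c b → b ∈ ancAYL D a y L := by
      rintro u b c ⟨s, t, hst⟩ h1 h2
      refine hcol c b u ⟨t.reverse, s.reverse, ?_⟩ h2 h1
      have := congrArg List.reverse hst
      simpa using this
    rcases hsep a rfl y rfl p ⟨hc, hh, hl, hnd⟩ with ⟨u, b, c, ⟨s, t, hi⟩, hn, hbZ⟩ |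
      ⟨u, b, c, hi, h2, hd⟩
    · apply hnb
      refine Or.inl ⟨u, b, c, ⟨s, t, hi⟩, hn, hbZ, ?_⟩
      have hc' := hc
      rw [hi] at hc'
      have hc2 := List.isChain_cons_cons.1 (List.isChain_append.1 hc').2.1
      have hc3 := List.isChain_cons_cons.1 hc2.2
      by_cases hbc : pbd D a y b c
      · exact aux_int _ _ hW p hc hlW hcol b c (s ++ [u]) t (by simp [hi]) hbc
      · have hcb := hc3.1.resolve_left hbc
        have hbu : pbd D a y b u := hc2.1.resolve_left (fun h => hn ⟨h, hcb⟩)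
        exact aux_int _ _ hW p.reverse hcr hhW hcolr b u (t.reverse ++ [c]) s.reverse
          (by simp [hi]) hbu
    · exact hnb (Or.inr ⟨u, b, c, hi, h2, fun d hd1 hd2 => hd d hd1 hd2.1⟩)
  · ext x
    constructor
    · rintro ⟨⟨h1, _⟩, h2⟩
      rw [← hforb]
      exact ⟨h1, h2⟩
    · exact fun h => h.elim
  · intro x hx
    exact ⟨hL hx, x, Or.inr hx, Relation.ReflTransGen.refl⟩

/-- if `Z` satisfies the graphical adjustment criterion, so does
`Z ∩ an_G({A,Y} ∪ L)`; in particular every minimal set satisfying the criterion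
is contained in `an_G({A,Y} ∪ L)`. -/
theorem stmt7 {V : Type*} [Fintype V] [DecidableEq V]
    (D : V → V → Prop) (hacy : Acyclic D)
    (A Y : V) (L N : Set V)
    (hAY : A ≠ Y) (hAancY : Relation.ReflTransGen D A Y)
    (hLnd : L ∩ desc D {A} = ∅) (hLY : Y ∉ L)
    (hN : {A, Y} ∪ L ⊆ N) :
    (∀ Z, GAC D A Y L N Z → GAC D A Y L N (Z ∩ ancAYL D A Y L)) ∧
    (∀ Z, MinimalGAC D A Y L N Z → Z ⊆ ancAYL D A Y L) := by
  refine ⟨fun Z h => aux_gac D A Y L N Z h, fun Z h => ?_⟩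
  by_contra hn
  refine h.2 _ ⟨Set.inter_subset_left, fun hs => hn fun x hx => (hs hx).2⟩
    (aux_gac D A Y L N Z h.1)

end CausalGraph
end

section
/- Suppose N = V. Let O := (pa_G(cn(A,Y,G)) \ forb(A,Y,G)) ∪ L, where pa_G(S) denotes the set of parents in G of vertices in S. Then O satisfies the graphical adjustment criterion for A,Y,L,N in G, and for every set Z satisfying the graphical adjustment criterion: A and O\Z are d-separated by Z in G, and Y and Z\O are d-separated by {A} ∪ O in G. -/
open Relation Set

namespace CausalGraph

section helpers

set_option linter.unusedSectionVars false

variable {V : Type*} [Fintype V] [DecidableEq V]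

lemma blocked_cons {E : V → V → Prop} {W : Set V} {p : List V} (a : V)
    (h : Blocked E W p) : Blocked E W (a :: p) := by
  rcases h with ⟨x, y, z, ⟨s, t, rfl⟩, h⟩ | ⟨x, y, z, ⟨s, t, rfl⟩, h⟩
  · exact Or.inl ⟨x, y, z, ⟨a :: s, t, rfl⟩, h⟩
  · exact Or.inr ⟨x, y, z, ⟨a :: s, t, rfl⟩, h⟩

lemma blocked_append {E : V → V → Prop} {W : Set V} {p : List V} (q : List V)
    (h : Blocked E W p) : Blocked E W (p ++ q) := by
  rcases h with ⟨x, y, z, ⟨s, t, rfl⟩, h⟩ | ⟨x, y, z, ⟨s, t, rfl⟩, h⟩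
  · exact Or.inl ⟨x, y, z, ⟨s, t ++ q, by simp⟩, h⟩
  · exact Or.inr ⟨x, y, z, ⟨s, t ++ q, by simp⟩, h⟩

lemma blocked_reverse {E : V → V → Prop} {W : Set V} {p : List V}
    (h : Blocked E W p.reverse) : Blocked E W p := by
  rcases h with ⟨x, y, z, ⟨s, t, e⟩, h, h'⟩ | ⟨x, y, z, ⟨s, t, e⟩, h, h'⟩
  · refine Or.inl ⟨z, y, x, ⟨t.reverse, s.reverse, ?_⟩, fun g => h g.symm, h'⟩
    rw [← List.reverse_reverse p, e]; simp
  · refine Or.inr ⟨z, y, x, ⟨t.reverse, s.reverse, ?_⟩, h.symm, h'⟩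
    rw [← List.reverse_reverse p, e]; simp

/-- the blocking condition at a triple -/
def Loc (E : V → V → Prop) (W : Set V) (a b c : V) : Prop :=
  (¬(E a b ∧ E c b) ∧ b ∈ W) ∨ ((E a b ∧ E c b) ∧ ∀ d ∈ desc E {b}, d ∉ W)

lemma blocked_loc {E : V → V → Prop} {W : Set V} {a b c : V} {t : List V}
    (h : Loc E W a b c) : Blocked E W (a :: b :: c :: t) := by
  rcases h with h | h
  · exact Or.inl ⟨a, b, c, ⟨[], t, rfl⟩, h⟩
  · exact Or.inr ⟨a, b, c, ⟨[], t, rfl⟩, h⟩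

lemma blocked_cases {E : V → V → Prop} {W : Set V} {a b c : V} {t : List V}
    (h : Blocked E W (a :: b :: c :: t)) : Loc E W a b c ∨ Blocked E W (b :: c :: t) := by
  rcases h with ⟨x, y, z, ⟨s, t', e⟩, h⟩ | ⟨x, y, z, ⟨s, t', e⟩, h⟩
  · cases s with
    | nil => simp at e; obtain ⟨rfl, rfl, rfl, rfl⟩ := e; exact Or.inl (Or.inl h)
    | cons u s =>
      simp at e; exact Or.inr (Or.inl ⟨x, y, z, ⟨s, t', e.2⟩, h⟩)
  · cases s with
    | nil => simp at e; obtain ⟨rfl, rfl, rfl, rfl⟩ := e; exact Or.inl (Or.inr h)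
    | cons u s =>
      simp at e; exact Or.inr (Or.inr ⟨x, y, z, ⟨s, t', e.2⟩, h⟩)

lemma not_blocked_short {E : V → V → Prop} {W : Set V} {p : List V}
    (hp : p.length ≤ 2) : ¬ Blocked E W p := by
  rintro (⟨x, y, z, ⟨s, t', e⟩, h⟩ | ⟨x, y, z, ⟨s, t', e⟩, h⟩) <;>
  · subst e; simp at hp; omega

/-- Leaving into a descendant-closed set disjoint from `W` blocks. -/
lemma forward_blocked {E : V → V → Prop} {W S : Set V}
    (hS : ∀ u v, u ∈ S → E u v → v ∈ S) (hW : ∀ u ∈ W, u ∉ S) {t : V} (ht : t ∉ S) :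
    ∀ (p : List V) (c w : V), E c w → w ∈ S →
      List.IsChain (fun a b => E a b ∨ E b a) (c :: w :: p) →
      (c :: w :: p).getLast? = some t → Blocked E W (c :: w :: p)
  | [], c, w, _, hw, _, hl => by
      simp at hl; subst hl; exact absurd hw ht
  | x :: p, c, w, hcw, hw, hch, hl => by
      have h2 := (List.isChain_cons_cons.1 hch).2
      by_cases hwx : E w x
      · refine blocked_cons _ (forward_blocked hS hW ht p w x hwx (hS _ _ hw hwx) h2 ?_)
        simpa using hl
      · have hxw : E x w := (List.isChain_cons_cons.1 h2).1.resolve_left hwx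
        refine blocked_loc (Or.inr ⟨⟨hcw, hxw⟩, ?_⟩)
        rintro d ⟨v, hv, hd⟩ hdW
        simp at hv; subst hv
        refine hW d hdW ?_
        clear hdW
        induction hd with
        | refl => exact hw
        | tail _ h ih => exact hS _ _ ih h

/-- Leaving `C` from within. -/
lemma exit_blocked {E : V → V → Prop} {W S C : Set V}
    (hCS : C ⊆ S)
    (hS : ∀ u v, u ∈ S → E u v → v ∈ S) (hW : ∀ u ∈ W, u ∉ S) {t : V} (ht : t ∉ S)
    (hpa : ∀ w, w ∉ C → ∀ c ∈ C, E w c → w ∈ W ∧ w ≠ t) :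
    ∀ (p : List V) (c : V), c ∈ C →
      List.IsChain (fun a b => E a b ∨ E b a) (c :: p) →
      (c :: p).getLast? = some t → Blocked E W (c :: p)
  | [], c, hc, _, hl => by
      simp at hl; subst hl; exact absurd (hCS hc) ht
  | w :: p, c, hc, hch, hl => by
      have h2 := List.isChain_cons_cons.1 hch
      by_cases hw : w ∈ C
      · refine blocked_cons _ (exit_blocked hCS hS hW ht hpa p w hw h2.2 ?_)
        simpa using hl
      · by_cases hcw : E c w
        · exact forward_blocked hS hW ht p c w hcw (hS _ _ (hCS hc) hcw) hch hl
        · have := hpa w hw c hc (h2.1.resolve_left hcw)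
          cases p with
          | nil => simp at hl; exact absurd hl this.2
          | cons x p => exact blocked_loc (Or.inl ⟨fun h => hcw h.1, this.1⟩)

lemma not_blocked_directed {E : V → V → Prop} (hac : Acyclic E) {Z : Set V} :
    ∀ q : List V, List.IsChain E q → (∀ y ∈ q, y ∉ Z) → ¬ Blocked E Z q
  | [], _, _ => not_blocked_short (by simp)
  | [_], _, _ => not_blocked_short (by simp)
  | [_, _], _, _ => not_blocked_short (by simp)
  | a :: b :: c :: q, hch, hZ => fun hb => by
      have h2 := List.isChain_cons_cons.1 hch
      have h3 := List.isChain_cons_cons.1 h2.2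
      rcases blocked_cases hb with (h | h) | h
      · exact hZ b (by simp) h.2
      · exact hac _ _ h3.1 (Relation.ReflTransGen.single h.1.2)
      · exact not_blocked_directed hac _ h2.2 (fun y hy => hZ y (by simp_all)) h

lemma blocked_cut {E : V → V → Prop} (hac : Acyclic E) {Z : Set V} {x : V} {q : List V}
    (hch : List.IsChain E (x :: q)) (hZ : ∀ y ∈ x :: q, y ∉ Z) :
    ∀ s : List V, Blocked E Z (s ++ x :: q) → Blocked E Z (s ++ [x])
  | [], h => absurd h (not_blocked_directed hac _ hch hZ)
  | [a], h => by
      cases q with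
      | nil => exact h
      | cons b q =>
        have h2 := List.isChain_cons_cons.1 hch
        rcases blocked_cases h with (h | h) | h
        · exact absurd h.2 (hZ x (by simp))
        · exact absurd (Relation.ReflTransGen.single h.1.2) (hac _ _ h2.1)
        · exact absurd h (not_blocked_directed hac _ hch hZ)
  | [a, b], h => by
      rcases blocked_cases (t := q) h with h | h
      · exact blocked_loc h
      · exact blocked_cons a (blocked_cut hac hch hZ [b] h)
  | a :: b :: c :: s, h => by
      rcases blocked_cases (t := s ++ x :: q) h with h | h
      · exact blocked_loc h
      · exact blocked_cons a (blocked_cut hac hch hZ (b :: c :: s) h)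

lemma first_hit {S : Set V} : ∀ (p : List V), (∃ y ∈ p, y ∈ S) →
    ∃ s x t, p = s ++ x :: t ∧ x ∈ S ∧ ∀ y ∈ s, y ∉ S
  | [], h => by simp at h
  | a :: p, h => by
      by_cases ha : a ∈ S
      · exact ⟨[], a, p, rfl, ha, by simp⟩
      · obtain ⟨s, x, t, rfl, hx, hs⟩ := first_hit p (by
          obtain ⟨y, hy, hyS⟩ := h
          rcases List.mem_cons.1 hy with rfl | hy
          · exact absurd hyS ha
          · exact ⟨y, hy, hyS⟩)
        refine ⟨a :: s, x, t, rfl, hx, ?_⟩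
        intro y hy
        rcases List.mem_cons.1 hy with rfl | hy
        · exact ha
        · exact hs y hy

lemma nodup_of_directed {E : V → V → Prop} (hac : Acyclic E) {q : List V}
    (h : List.IsChain E q) : q.Nodup := by
  have h1 : List.IsChain (Relation.TransGen E) q := h.imp fun _ _ h => .single h
  refine h1.pairwise.imp ?_
  rintro a b hab rfl
  obtain ⟨c, h1, h2⟩ := Relation.TransGen.head'_iff.1 hab
  exact hac _ _ h1 h2

variable {D : V → V → Prop} {A Y : V}

lemma antisymm_rtg (hac : Acyclic D) {u v : V} (h1 : ReflTransGen D u v)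
    (h2 : ReflTransGen D v u) : u = v := by
  rcases Relation.ReflTransGen.cases_head h1 with h | ⟨w, hw, h⟩
  · exact h
  · exact absurd (h.trans h2) (hac _ _ hw)

lemma cn_sub : cn D A Y ⊆ desc D (cn D A Y) := fun v hv => ⟨v, hv, .refl⟩

lemma desc_closed {S : Set V} {u v : V} (hu : u ∈ desc D S) (h : D u v) : v ∈ desc D S := by
  obtain ⟨c, hc, h'⟩ := hu
  exact ⟨c, hc, h'.tail h⟩

lemma A_not_desc (hac : Acyclic D) : A ∉ desc D (cn D A Y) := by
  rintro ⟨c, hc, h⟩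
  exact hc.1 (antisymm_rtg hac h hc.2.1)

lemma desc_cn_of_A {v : V} (h : v ∈ desc D (cn D A Y)) : ReflTransGen D A v := by
  obtain ⟨c, hc, h⟩ := h
  exact hc.2.1.trans h

lemma parent_cn (hac : Acyclic D) {w c : V} (hw : w ∉ cn D A Y) (hc : c ∈ cn D A Y)
    (h : D w c) : w ∉ desc D (cn D A Y) := fun hd =>
  hw ⟨fun e => A_not_desc hac (e ▸ hd), desc_cn_of_A hd, (Relation.ReflTransGen.single h).trans hc.2.2⟩

lemma pbd_acyclic (hac : Acyclic D) : Acyclic (pbd D A Y) := fun u v h h' =>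
  hac u v h.1 (Relation.ReflTransGen.mono (fun _ _ h => h.1) _ _ h')

lemma directed_cn {x : V} (hxY : ReflTransGen D x Y) (hac : Acyclic D) :
    x ∈ cn D A Y → ∃ q, List.IsChain (pbd D A Y) (x :: q) ∧ (x :: q).getLast? = some Y ∧
      ∀ y ∈ x :: q, y ∈ cn D A Y := by
  induction hxY using Relation.ReflTransGen.head_induction_on with
  | refl => intro h; exact ⟨[], by simp, by simp, by simpa using h⟩
  | head h h' ih =>
    rename_i a c
    intro ha
    have hc : c ∈ cn D A Y := by
      refine ⟨?_, ha.2.1.tail h, h'⟩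
      rintro rfl
      exact hac _ _ h ha.2.1
    obtain ⟨q, h1, h2, h3⟩ := ih hc
    refine ⟨c :: q, List.isChain_cons_cons.2 ⟨⟨h, fun e => ha.1 e.1⟩, h1⟩, by simpa using h2, ?_⟩
    intro y hy
    rcases List.mem_cons.1 hy with rfl | hy
    · exact ha
    · exact h3 y hy

lemma rtg_pbd {b d : V} (h : ReflTransGen D b d) :
    ReflTransGen (pbd D A Y) b d ∨ d ∈ desc D (cn D A Y) := by
  induction h with
  | refl => exact Or.inl .refl
  | tail _ h ih =>
    rename_i u d _
    rcases ih with ih | ih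
    · by_cases e : u = A ∧ d ∈ cn D A Y
      · exact Or.inr (cn_sub e.2)
      · exact Or.inl (ih.tail ⟨h, e⟩)
    · exact Or.inr (desc_closed ih h)

lemma blocked_of_pbd {Z : Set V} (hZ : ∀ z ∈ Z, z ∉ desc D (cn D A Y)) {p : List V}
    (h : Blocked (pbd D A Y) Z p) : Blocked D Z p := by
  rcases h with ⟨x, y, z, hi, h, h'⟩ | ⟨x, y, z, hi, h, h'⟩
  · refine Or.inl ⟨x, y, z, hi, fun g => h ?_, h'⟩
    have := fun h => hZ y h' (cn_sub h)
    exact ⟨⟨g.1, fun e => this e.2⟩, ⟨g.2, fun e => this e.2⟩⟩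
  · refine Or.inr ⟨x, y, z, hi, ⟨h.1.1, h.2.1⟩, ?_⟩
    rintro d ⟨v, hv, hd⟩ hdZ
    simp at hv; subst hv
    rcases rtg_pbd (A := A) (Y := Y) hd with g | g
    · exact h' d ⟨v, rfl, g⟩ hdZ
    · exact hZ d hdZ g

lemma part2 (hac : Acyclic D) {Z : Set V} (hsep : DSep (pbd D A Y) {A} {Y} Z)
    (hZ : ∀ z ∈ Z, z ∉ desc D (cn D A Y)) {o c : V} (hc : c ∈ cn D A Y) (hoc : D o c)
    (hod : o ∉ desc D (cn D A Y)) (hoA : o ≠ A) (hoZ : o ∉ Z) (p : List V)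
    (hp : IsPath (fun a b => D a b ∨ D b a) A o p) : Blocked D Z p := by
  obtain ⟨hch, hhd, hl, hnd⟩ := hp
  have hch : List.IsChain (fun a b => D a b ∨ D b a) p := hch
  have hA : A ∉ desc D (cn D A Y) := A_not_desc hac
  obtain ⟨p', rfl⟩ : ∃ p', p = A :: p' := by
    cases p with
    | nil => simp at hhd
    | cons a p' => simp at hhd; subst hhd; exact ⟨p', rfl⟩
  cases p' with
  | nil => simp at hl; exact absurd hl.symm hoA
  | cons w p' =>
  by_cases hAw : D A w ∧ w ∈ cn D A Y
  · exact forward_blocked (fun _ _ => desc_closed) hZ hod p' A w hAw.1 (cn_sub hAw.2) hch hl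
  have hchE : List.IsChain (fun a b => pbd D A Y a b ∨ pbd D A Y b a) (A :: w :: p') := by
    have h2 := List.isChain_cons_cons.1 hch
    have hn := List.nodup_cons.1 hnd
    refine List.isChain_cons_cons.2 ⟨?_, ?_⟩
    · rcases h2.1 with h | h
      · exact Or.inl ⟨h, fun e => hAw ⟨h, e.2⟩⟩
      · exact Or.inr ⟨h, fun e => hA (cn_sub e.2)⟩
    · refine List.IsChain.imp_of_mem_imp ?_ h2.2
      rintro a b ha hb (h | h)
      · exact Or.inl ⟨h, fun e => hn.1 (e.1 ▸ ha)⟩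
      · exact Or.inr ⟨h, fun e => hn.1 (e.1 ▸ hb)⟩
  obtain ⟨s, x, t, hst, hx, hs⟩ := first_hit (S := insert o (cn D A Y)) (A :: w :: p')
    ⟨o, List.mem_of_getLast? hl, by simp⟩
  have hq : ∃ q, List.IsChain (pbd D A Y) (x :: q) ∧ (x :: q).getLast? = some Y ∧
      ∀ y ∈ x :: q, y ∈ insert o (cn D A Y) := by
    rcases hx with rfl | hx
    · obtain ⟨q, h1, h2, h3⟩ := directed_cn hc.2.2 hac hc
      refine ⟨c :: q, List.isChain_cons_cons.2 ⟨⟨hoc, fun e => hoA e.1⟩, h1⟩, by simpa using h2, ?_⟩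
      intro y hy
      rcases List.mem_cons.1 hy with rfl | hy
      · exact Or.inl rfl
      · exact Or.inr (h3 y hy)
    · obtain ⟨q, h1, h2, h3⟩ := directed_cn hx.2.2 hac hx
      exact ⟨q, h1, h2, fun y hy => Or.inr (h3 y hy)⟩
  obtain ⟨q, h1, h2, h3⟩ := hq
  have hqZ : ∀ y ∈ x :: q, y ∉ Z := by
    intro y hy hyZ
    rcases h3 y hy with rfl | h
    · exact hoZ hyZ
    · exact hZ y hyZ (cn_sub h)
  rw [hst] at hchE hnd
  have hpath : IsPath (fun a b => pbd D A Y a b ∨ pbd D A Y b a) A Y (s ++ x :: q) := by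
    refine ⟨?_, ?_, ?_, ?_⟩
    · exact List.isChain_split.2 ⟨(List.isChain_split.1 hchE).1, h1.imp fun _ _ h => Or.inl h⟩
    · cases s with
      | nil =>
        simp at hst
        rcases hx with hx | hx
        · exact absurd (hx.symm.trans hst.1.symm) hoA
        · exact absurd (cn_sub (hst.1 ▸ hx)) hA
      | cons a s => simp at hst; simp [hst.1]
    · rw [List.getLast?_append, h2]; rfl
    · refine List.nodup_append.2 ⟨(List.nodup_append.1 hnd).1, nodup_of_directed (pbd_acyclic hac) h1, ?_⟩
      rintro a ha b hb rfl
      exact hs a ha (h3 a hb)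
  have hb := blocked_cut (pbd_acyclic hac) h1 hqZ s (hsep A rfl Y rfl _ hpath)
  have := blocked_of_pbd hZ (blocked_append t hb)
  rw [hst]
  simpa using this

end helpers

/-- Proposition 2 (statement 8): with no hidden variables (`N = V`), the set
`O = (pa_G(cn(A,Y,G)) \ forb(A,Y,G)) ∪ L` satisfies the graphical adjustment
criterion, and for every `Z` satisfying the criterion, `A ⊥⊥_G O \ Z | Z` and
`Y ⊥⊥_G Z \ O | {A} ∪ O`. -/
theorem stmt8 {V : Type*} [Fintype V] [DecidableEq V]
    (D : V → V → Prop) (hacy : Acyclic D)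
    (A Y : V) (L : Set V)
    (hAY : A ≠ Y) (hAancY : Relation.ReflTransGen D A Y)
    (hLnd : L ∩ desc D {A} = ∅) (hLY : Y ∉ L) :
    GAC D A Y L Set.univ ((parents D (cn D A Y) \ forb D A Y) ∪ L) ∧
    ∀ Z, GAC D A Y L Set.univ Z →
      DSep D {A} (((parents D (cn D A Y) \ forb D A Y) ∪ L) \ Z) Z ∧
      DSep D {Y} (Z \ ((parents D (cn D A Y) \ forb D A Y) ∪ L))
        ({A} ∪ ((parents D (cn D A Y) \ forb D A Y) ∪ L)) := by
  have hA : A ∉ desc D (cn D A Y) := A_not_desc hacy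
  have hYcn : Y ∈ cn D A Y := ⟨hAY.symm, hAancY, .refl⟩
  have hLS : ∀ v ∈ L, ¬ ReflTransGen D A v := fun v hv h => by
    have : v ∈ L ∩ desc D {A} := ⟨hv, A, rfl, h⟩
    rw [hLnd] at this; exact this
  have hO : ∀ u ∈ (parents D (cn D A Y) \ forb D A Y) ∪ L, u ∉ desc D (cn D A Y) := by
    rintro u (hu | hu) h
    · exact hu.2 (Or.inl h)
    · exact hLS u hu (desc_cn_of_A h)
  refine ⟨⟨?_, ?_, subset_union_right, subset_univ _⟩, ?_⟩
  · rintro s rfl t rfl p ⟨hch, hhd, hl, -⟩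
    have hch : List.IsChain _ p := hch
    apply blocked_reverse
    have hl' : p.reverse.getLast? = some s := by simpa using hhd
    have hhd' : p.reverse.head? = some t := by simpa using hl
    have hch' : List.IsChain (fun a b => pbd D s t a b ∨ pbd D s t b a) p.reverse :=
      List.isChain_reverse.2 (hch.imp fun _ _ h => h.symm)
    generalize p.reverse = r at *
    cases r with
    | nil => simp at hhd'
    | cons c r =>
      simp at hhd'; subst hhd'
      refine exit_blocked cn_sub (fun _ _ hu h => desc_closed hu h.1) hO hA ?_ r c hYcn hch' hl'
      intro w hw d hd h
      have hne : w ≠ s := fun e => h.2 ⟨e, hd⟩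
      refine ⟨Or.inl ⟨⟨d, hd, h.1⟩, ?_⟩, hne⟩
      rintro (g | g)
      · exact parent_cn hacy hw hd h.1 g
      · exact hne g
  · ext u
    simp only [mem_inter_iff, mem_empty_iff_false, iff_false]
    rintro ⟨hu, h | h⟩
    · exact hO u hu h
    · rcases hu with hu | hu
      · exact hu.2 (Or.inr h)
      · cases h; exact hLS _ hu .refl
  · rintro Z ⟨hsep, hZf, hLZ, -⟩
    have hZ : ∀ z ∈ Z, z ∉ forb D A Y := fun z hz h => by
      have : z ∈ Z ∩ forb D A Y := ⟨hz, h⟩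
      rw [hZf] at this; exact this
    refine ⟨?_, ?_⟩
    · rintro s rfl o ⟨ho | ho, hoZ⟩ p hp
      · obtain ⟨⟨c, hc, hoc⟩, hof⟩ := ho
        exact part2 hacy hsep (fun z hz h => hZ z hz (Or.inl h)) hc hoc
          (fun h => hof (Or.inl h)) (fun h => hof (Or.inr h)) hoZ p hp
      · exact absurd (hLZ ho) hoZ
    · rintro s rfl z ⟨hzZ, hzO⟩ p ⟨hch, hhd, hl, -⟩
      have hch : List.IsChain _ p := hch
      cases p with
      | nil => simp at hhd
      | cons c r =>
        simp at hhd; subst hhd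
        refine exit_blocked cn_sub (fun _ _ hu h => desc_closed hu h) ?_
          (fun h => hZ z hzZ (Or.inl h)) ?_ r c hYcn hch hl
        · rintro u (rfl | hu)
          · exact hA
          · exact hO u hu
        · intro w hw d hd h
          by_cases e : w = A
          · exact ⟨Or.inl e, fun e' => hZ z hzZ (Or.inr (e' ▸ e))⟩
          · have : w ∈ (parents D (cn D A c) \ forb D A c) ∪ L := by
              refine Or.inl ⟨⟨d, hd, h⟩, ?_⟩
              rintro (g | g)
              · exact parent_cn hacy hw hd h g
              · exact e g
            exact ⟨Or.inr this, fun e' => hzO (e' ▸ this)⟩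

end CausalGraph
end

section
/- Let Z₁ and Z₂ be sets satisfying the graphical adjustment criterion for A,Y,L,N in G with Z₁ ⊆ V(H^1) and Z₂ ⊆ V(H^1), and suppose Z₁ ⊴_{H^1} Z₂ (i.e., Y ⊥_{H^1} Z₂\Z₁ | Z₁ and A ⊥_{H^1} Z₁\Z₂ | Z₂). Then Y and Z₂\Z₁ are d-separated by {A} ∪ Z₁ in G, and A and Z₁\Z₂ are d-separated by Z₂ in G. -/
open Relation Set

namespace CausalGraph

def OpenL {V : Type*} (D : V → V → Prop) (Z : Set V) (p : List V) : Prop :=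
  ∀ x y z, InteriorAt p x y z →
    (¬(D x y ∧ D z y) → y ∉ Z) ∧ ((D x y ∧ D z y) → ∃ d, ReflTransGen D y d ∧ d ∈ Z)

lemma openL_of_not_blocked {V : Type*} {D : V → V → Prop} {Z : Set V} {p : List V}
    (h : ¬ Blocked D Z p) : OpenL D Z p := by
  intro x y z hi
  constructor
  · intro hn hz
    exact h (Or.inl ⟨x, y, z, hi, hn, hz⟩)
  · intro hc
    by_contra hne
    refine h (Or.inr ⟨x, y, z, hi, hc, ?_⟩)
    rintro d ⟨v, hv, hd⟩ hdz
    rw [Set.mem_singleton_iff] at hv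
    subst hv
    exact hne ⟨d, hd, hdz⟩

lemma OpenL.tail {V : Type*} {D : V → V → Prop} {Z : Set V} {a : V} {p : List V}
    (h : OpenL D Z (a :: p)) : OpenL D Z p := by
  rintro x y z ⟨s, t, rfl⟩
  exact h x y z ⟨a :: s, t, rfl⟩

lemma mem_of_rtg {V : Type*} {D : V → V → Prop} {U : Set V}
    (hU : ∀ u v, D u v → v ∈ U → u ∈ U) {u v : V} (h : ReflTransGen D u v) (hv : v ∈ U) :
    u ∈ U := by
  induction h using ReflTransGen.head_induction_on with
  | refl => exact hv
  | head hab _ ih => exact hU _ _ hab ih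

lemma fwd_mem {V : Type*} {D : V → V → Prop} {Z U : Set V}
    (hU : ∀ u v, D u v → v ∈ U → u ∈ U) (hZU : Z ⊆ U) {t : V} (ht : t ∈ U) :
    ∀ (l : List V) (x y : V), List.IsChain (fun a b => D a b ∨ D b a) (x :: y :: l) →
      OpenL D Z (x :: y :: l) → (x :: y :: l).getLast? = some t → D x y → y ∈ U := by
  intro l
  induction l with
  | nil =>
    intro x y _ _ hl _
    simp at hl
    subst hl; exact ht
  | cons z l ih =>
    intro x y hc ho hl hxy
    by_cases hzy : D z y
    · obtain ⟨d, hd, hdz⟩ := (ho x y z ⟨[], l, rfl⟩).2 ⟨hxy, hzy⟩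
      exact mem_of_rtg hU hd (hZU hdz)
    · have hc' := hc.tail
      have hyz : D y z := by
        have := List.isChain_cons_cons.1 hc'
        tauto
      refine hU _ _ hyz (ih y z hc' ho.tail ?_ hyz)
      simpa using hl

lemma all_mem {V : Type*} {D : V → V → Prop} {Z U : Set V}
    (hU : ∀ u v, D u v → v ∈ U → u ∈ U) (hZU : Z ⊆ U) {t : V} (ht : t ∈ U) :
    ∀ (l : List V) (x : V), x ∈ U → List.IsChain (fun a b => D a b ∨ D b a) (x :: l) →
      OpenL D Z (x :: l) → (x :: l).getLast? = some t → ∀ v ∈ x :: l, v ∈ U := by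
  intro l
  induction l with
  | nil => intro x hx _ _ _ v hv; simp at hv; subst hv; exact hx
  | cons y l ih =>
    intro x hx hc ho hl v hv
    have hy : y ∈ U := by
      rcases (List.isChain_cons_cons.1 hc).1 with h | h
      · exact fwd_mem hU hZU ht l x y hc ho hl h
      · exact hU _ _ h hx
    rcases List.mem_cons.1 hv with rfl | hv
    · exact hx
    · exact ih y hy hc.tail ho.tail (by simpa using hl) v hv

/-- moral step inside `U` avoiding `Z` -/
def MS {V : Type*} (D : V → V → Prop) (Z U : Set V) (u v : V) : Prop :=
  u ∉ Z ∧ v ∉ Z ∧ u ∈ U ∧ v ∈ U ∧ (D u v ∨ D v u ∨ ∃ w ∈ U, D u w ∧ D v w)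

lemma walk_of_open {V : Type*} {D : V → V → Prop} (hacy : Acyclic D) {Z U : Set V}
    {t : V} (ht : t ∉ Z) :
    ∀ (n : ℕ) (l : List V) (x : V), l.length ≤ n → x ∉ Z →
      List.IsChain (fun a b => D a b ∨ D b a) (x :: l) →
      OpenL D Z (x :: l) → (x :: l).getLast? = some t → (∀ v ∈ x :: l, v ∈ U) →
      ReflTransGen (MS D Z U) x t := by
  intro n
  induction n with
  | zero =>
    intro l x hn hx hc ho hl hm
    have : l = [] := by simpa using hn
    subst this
    simp at hl; subst hl; exact .refl
  | succ n ih =>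
    intro l x hn hx hc ho hl hm
    match l with
    | [] => simp at hl; subst hl; exact .refl
    | [y] =>
      simp at hl; subst hl
      have h1 := (List.isChain_cons_cons.1 hc).1
      exact .single ⟨hx, ht, hm _ (by simp), hm _ (by simp), by tauto⟩
    | y :: z :: l =>
      have hc1 := List.isChain_cons_cons.1 hc
      have hc2 := List.isChain_cons_cons.1 hc1.2
      by_cases hcol : D x y ∧ D z y
      · have hz : z ∉ Z := by
          match l with
          | [] => simp at hl; subst hl; exact ht
          | w :: l =>
            refine (ho y z w ⟨[x], l, rfl⟩).1 ?_
            rintro ⟨h, -⟩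
            exact hacy _ _ h (.single hcol.2)
        refine .head (b := z) ⟨hx, hz, hm _ (by simp), hm _ (by simp),
          Or.inr (Or.inr ⟨y, hm _ (by simp), hcol⟩)⟩ ?_
        refine ih l z (by simp at hn; omega) hz hc2.2 ho.tail.tail (by simpa using hl) ?_
        intro v hv; exact hm v (by simp at hv ⊢; tauto)
      · have hy : y ∉ Z := (ho x y z ⟨[], l, rfl⟩).1 hcol
        refine .head (b := y) ⟨hx, hy, hm _ (by simp), hm _ (by simp), by tauto⟩ ?_
        refine ih (z :: l) y (by simp at hn ⊢; omega) hy hc1.2 ho.tail (by simpa using hl) ?_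
        intro v hv; exact hm v (by simp at hv ⊢; tauto)

lemma path_of_rtg {V : Type*} {r : V → V → Prop} {u v : V} (h : ReflTransGen r u v) :
    ∃ p, IsPath r u v p ∧ ∀ x ∈ p, x ≠ v → ∃ y, r x y := by
  induction h using ReflTransGen.head_induction_on with
  | refl =>
    exact ⟨[v], ⟨List.isChain_singleton _, rfl, rfl, by simp⟩, by simp⟩
  | @head a c hac _ ih =>
    obtain ⟨p, ⟨hc, hh, hl, hn⟩, hp⟩ := ih
    by_cases ha : a ∈ p
    · obtain ⟨s, t, rfl⟩ := List.append_of_mem ha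
      refine ⟨a :: t, ⟨?_, rfl, ?_, ?_⟩, ?_⟩
      · exact (List.isChain_append.1 hc).2.1
      · rw [List.getLast?_append] at hl
        rw [List.getLast?_cons] at hl ⊢
        simpa using hl
      · exact (List.nodup_append.1 hn).2.1
      · intro x hx; exact hp x (List.mem_append_right _ hx)
    · cases p with
      | nil => simp at hh
      | cons b t =>
        simp at hh; subst hh
        refine ⟨a :: b :: t, ⟨List.isChain_cons_cons.2 ⟨hac, hc⟩, rfl, ?_, ?_⟩, ?_⟩
        · simpa using hl
        · exact List.nodup_cons.2 ⟨ha, hn⟩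
        · intro x hx hxv
          rcases List.mem_cons.1 hx with rfl | hx
          · exact ⟨_, hac⟩
          · exact hp x hx hxv

lemma IsPath.mono {V : Type*} {r r' : V → V → Prop} (h : ∀ a b, r a b → r' a b) {u v : V}
    {p : List V} (hp : IsPath r u v p) : IsPath r' u v p :=
  ⟨List.IsChain.imp h hp.1, hp.2⟩

lemma H1_adj {V : Type*} {D : V → V → Prop} {A Y : V} {L N : Set V} {u v : V}
    (hu : u ∈ H1verts D A Y L N) (hv : v ∈ H1verts D A Y L N) (huv : u ≠ v)
    (h : ReflTransGen (fun a b => (H0 D A Y L).Adj a b ∧ (a = u ∨ a ∈ Ignore D A Y L N)) u v) :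
    (H1 D A Y L N).Adj u v := by
  obtain ⟨p, hp, hp'⟩ := path_of_rtg h
  refine (SimpleGraph.fromRel_adj _ _ _).2 ⟨huv, Or.inl ⟨hu, hv, Or.inl ⟨p, ?_, ?_⟩⟩⟩
  · exact hp.mono (fun a b h => h.1)
  · intro x hx hxu hxv
    obtain ⟨y, -, hy⟩ := hp' x hx hxv
    tauto

lemma contract {V : Type*} {D : V → V → Prop} {A Y : V} {L N Z : Set V} {s t : V}
    (hs : s ∈ H1verts D A Y L N) (hsZ : s ∉ Z)
    (h : ReflTransGen (fun a b => a ∉ Z ∧ b ∉ Z ∧ (a = b ∨ (H0 D A Y L).Adj a b)) s t) :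
    t ∉ Z ∧ ∃ u, u ∈ H1verts D A Y L N ∧ u ∉ Z ∧
      ReflTransGen (fun a b => a ∉ Z ∧ b ∉ Z ∧ (H1 D A Y L N).Adj a b) s u ∧
      ReflTransGen (fun a b => (H0 D A Y L).Adj a b ∧ (a = u ∨ a ∈ Ignore D A Y L N)) u t := by
  induction h with
  | refl => exact ⟨hsZ, s, hs, hsZ, .refl, .refl⟩
  | @tail v w _ hvw ih =>
    obtain ⟨hv, u, hu, huZ, hsu, huv⟩ := ih
    obtain ⟨-, hw, hvw⟩ := hvw
    refine ⟨hw, ?_⟩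
    rcases hvw with rfl | hvw
    · exact ⟨u, hu, huZ, hsu, huv⟩
    by_cases hcase : v = u ∨ v ∈ Ignore D A Y L N
    · exact ⟨u, hu, huZ, hsu, huv.tail ⟨hvw, hcase⟩⟩
    · push Not at hcase
      have hvA : v ∈ ancAYL D A Y L := by
        have := (SimpleGraph.fromRel_adj _ _ _).1 hvw
        tauto
      have hv1 : v ∈ H1verts D A Y L N := ⟨hvA, hcase.2⟩
      exact ⟨v, hv1, hv, hsu.tail ⟨huZ, hv, H1_adj hu hv1 (Ne.symm hcase.1) huv⟩,
        .single ⟨hvw, Or.inl rfl⟩⟩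

lemma core {V : Type*} {D : V → V → Prop} (hacy : Acyclic D) {A Y : V} {L N Z Z' U : Set V}
    {s t : V} (hs : s ∈ H1verts D A Y L N) (ht : t ∈ H1verts D A Y L N)
    (hsZ : s ∉ Z) (htZ : t ∉ Z)
    (hU : ∀ u v, D u v → v ∈ U → u ∈ U) (hZU : Z ⊆ U) (hsU : s ∈ U) (htU : t ∈ U)
    (hUA : U ⊆ ancAYL D A Y L) (hZ' : Z' ⊆ Z)
    (hpbd : ∀ u v, u ∉ Z → v ∈ U → D u v → pbd D A Y u v)
    (hsep : ∀ p : List V, IsPath (H1 D A Y L N).Adj s t p → ∃ z ∈ Z', z ∈ p)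
    (p : List V) (hp : IsPath (fun a b => D a b ∨ D b a) s t p) : Blocked D Z p := by
  by_contra hb
  have ho := openL_of_not_blocked hb
  obtain ⟨hc, hh, hl, -⟩ := hp
  cases p with
  | nil => simp at hh
  | cons x l =>
  simp at hh
  subst hh
  have hm := all_mem hU hZU htU l x hsU hc ho hl
  have hw := walk_of_open hacy htZ l.length l x le_rfl hsZ hc ho hl hm
  have hw' : ReflTransGen (fun a b => a ∉ Z ∧ b ∉ Z ∧ (a = b ∨ (H0 D A Y L).Adj a b)) x t := by
    refine ReflTransGen.mono ?_ _ _ hw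
    rintro a b ⟨ha, hb, haU, hbU, h⟩
    refine ⟨ha, hb, ?_⟩
    by_cases hab : a = b
    · exact Or.inl hab
    refine Or.inr ((SimpleGraph.fromRel_adj _ _ _).2 ⟨hab, Or.inl ⟨hUA haU, hUA hbU, ?_⟩⟩)
    rcases h with h | h | ⟨w, hw, h1, h2⟩
    · exact Or.inl (hpbd _ _ ha hbU h)
    · exact Or.inr (Or.inl (hpbd _ _ hb haU h))
    · exact Or.inr (Or.inr ⟨w, hUA hw, hpbd _ _ ha hw h1, hpbd _ _ hb hw h2⟩)
  obtain ⟨-, u, hu, huZ, hsu, hut⟩ := contract hs hsZ hw'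
  have hfin : ReflTransGen (fun a b => a ∉ Z ∧ b ∉ Z ∧ (H1 D A Y L N).Adj a b) x t := by
    by_cases h : u = t
    · exact h ▸ hsu
    · exact hsu.tail ⟨huZ, htZ, H1_adj hu ht h hut⟩
  obtain ⟨q, hq, hq'⟩ := path_of_rtg hfin
  obtain ⟨z, hz, hzq⟩ := hsep q (hq.mono (fun a b h => h.2.2))
  by_cases h : z = t
  · exact htZ (h ▸ hZ' hz)
  · obtain ⟨y, hy, -⟩ := hq' z hzq h
    exact hy (hZ' hz)

/-- Proposition 5 (statement 9): if `Z₁, Z₂ ⊆ V(H¹)` satisfy the graphical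
adjustment criterion and `Z₁ ⊴_{H¹} Z₂`, then `Y ⊥⊥_G Z₂ \ Z₁ | {A} ∪ Z₁` and
`A ⊥⊥_G Z₁ \ Z₂ | Z₂`. -/
theorem stmt9 {V : Type*} [Fintype V] [DecidableEq V]
    (D : V → V → Prop) (hacy : Acyclic D)
    (A Y : V) (L N : Set V)
    (hAY : A ≠ Y) (hAancY : Relation.ReflTransGen D A Y)
    (hLnd : L ∩ desc D {A} = ∅) (hLY : Y ∉ L)
    (hN : {A, Y} ∪ L ⊆ N)
    (Z₁ Z₂ : Set V)
    (hZ₁ : GAC D A Y L N Z₁) (hZ₂ : GAC D A Y L N Z₂)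
    (hZ₁v : Z₁ ⊆ H1verts D A Y L N) (hZ₂v : Z₂ ⊆ H1verts D A Y L N)
    (hord : TLE (H1 D A Y L N) A Y Z₁ Z₂) :
    DSep D {Y} (Z₂ \ Z₁) ({A} ∪ Z₁) ∧ DSep D {A} (Z₁ \ Z₂) Z₂ := by
  obtain ⟨-, hf1, -, -⟩ := hZ₁
  obtain ⟨-, hf2, -, -⟩ := hZ₂
  have hAv : A ∈ H1verts D A Y L N :=
    ⟨⟨A, by simp, .refl⟩, fun h => h.1.2 (by simp)⟩
  have hYv : Y ∈ H1verts D A Y L N :=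
    ⟨⟨Y, by simp, .refl⟩, fun h => h.1.2 (by simp)⟩
  have hcl : ∀ S : Set V, ∀ u v, D u v → v ∈ anc D S → u ∈ anc D S := by
    rintro S u v huv ⟨w, hw, h⟩
    exact ⟨w, hw, h.head huv⟩
  have hd1 : ∀ z ∈ Z₁, z ∉ forb D A Y := fun z hz hf =>
    (Set.eq_empty_iff_forall_notMem.1 hf1) z ⟨hz, hf⟩
  have hd2 : ∀ z ∈ Z₂, z ∉ forb D A Y := fun z hz hf =>
    (Set.eq_empty_iff_forall_notMem.1 hf2) z ⟨hz, hf⟩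
  have hAf : A ∈ forb D A Y := Or.inr rfl
  have hYf : Y ∈ forb D A Y := Or.inl ⟨Y, ⟨hAY.symm, hAancY, .refl⟩, .refl⟩
  obtain ⟨ho1, ho2⟩ := hord
  constructor
  · rintro s hs t ht p hp
    rw [Set.mem_singleton_iff] at hs
    subst hs
    refine core hacy (U := ancAYL D A s L) (Z' := Z₁) hYv (hZ₂v ht.1) ?_ ?_ (hcl _) ?_ hYv.1
      (hZ₂v ht.1).1 subset_rfl ?_ ?_ (ho1 s rfl t ht) p hp
    · rintro (h | h)
      · exact hAY h.symm
      · exact hd1 _ h hYf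
    · rintro (h | h)
      · rw [Set.mem_singleton_iff] at h
        exact hd2 _ ht.1 (h ▸ hAf)
      · exact ht.2 h
    · rintro z (h | h)
      · rw [Set.mem_singleton_iff] at h
        exact h ▸ hAv.1
      · exact (hZ₁v h).1
    · exact fun z h => Or.inr h
    · intro u v hu _ huv
      exact ⟨huv, fun h => hu (Or.inl h.1)⟩
  · rintro s hs t ht p hp
    rw [Set.mem_singleton_iff] at hs
    subst hs
    refine core hacy (U := anc D ({s} ∪ (Z₁ ∪ Z₂))) (Z' := Z₂) hAv (hZ₁v ht.1) ?_ ht.2 (hcl _)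
      ?_ ⟨s, Or.inl rfl, .refl⟩ ⟨t, Or.inr (Or.inl ht.1), .refl⟩ ?_ subset_rfl ?_
      (ho2 s rfl t ht) p hp
    · exact fun h => hd2 _ h hAf
    · exact fun z h => ⟨z, Or.inr (Or.inr h), .refl⟩
    · rintro u ⟨w, hw, huw⟩
      refine mem_of_rtg (hcl _) huw ?_
      rcases hw with h | h | h
      · rw [Set.mem_singleton_iff] at h
        exact h ▸ hAv.1
      · exact (hZ₁v h).1
      · exact (hZ₂v h).1
    · rintro u v - ⟨w, hw, hvw⟩ huv
      refine ⟨huv, ?_⟩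
      rintro ⟨rfl, hv⟩
      rcases hw with h | h | h
      · rw [Set.mem_singleton_iff] at h
        exact hacy _ _ huv (h ▸ hvw)
      · exact hd1 _ h (Or.inl ⟨v, hv, hvw⟩)
      · exact hd2 _ h (Or.inl ⟨v, hv, hvw⟩)

end CausalGraph
end
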